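/- arXiv:1909.02922 — 2 statements merged into one kernel-verified Lean document; each statement's English description precedes it below -/
import Mathlib

section
/- Let Γ be a discrete subgroup of G = PSL(2,ℂ). Let X ⊆ Γ\G be a closed H-invariant subset containing no periodic U-orbit (i.e. there is no x ∈ X and t ≠ 0 with x·u_t = x), and let W ⊆ Γ\G be a compact subset with X ∩ W ≠ ∅ such that for every y ∈ X ∩ W the return-time set T(y) := {t ∈ ℝ : y·u_t ∈ W} has accumulating renormalizations. Let Y ⊆ X be U-minimal with respect to W and suppose that X ∖ y₀H is not closed for some y₀ ∈ Y ∩ W. Then Y·v ⊆ X for some v ∈ V with v ≠ e. -/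
open scoped MatrixGroups
open Matrix Filter

noncomputable section

/-- `SL(2,ℂ)`. -/
abbrev SL2C := Matrix.SpecialLinearGroup (Fin 2) ℂ

instance : TopologicalSpace SL2C := instTopologicalSpaceSubtype

/-- `G = PSL(2,ℂ) = SL(2,ℂ)/{±I}`, with the quotient topology. -/
abbrev PSL2C := Matrix.ProjectiveSpecialLinearGroup (Fin 2) ℂ

/-- The projection `π : SL(2,ℂ) → PSL(2,ℂ)`. -/
def pr : SL2C →* PSL2C := QuotientGroup.mk' _

/-- The upper triangular unipotent matrix `[[1, t],[0, 1]]` as an element of `SL(2,ℂ)`. -/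
def uMat (t : ℂ) : SL2C := ⟨!![1, t; 0, 1], by simp [Matrix.det_fin_two_of]⟩

/-- `u_t = π [[1, t],[0, 1]]` for `t ∈ ℝ`. -/
def uu (t : ℝ) : PSL2C := pr (uMat t)

/-- `v_s = π [[1, is],[0, 1]]` for `s ∈ ℝ`. -/
def vv (s : ℝ) : PSL2C := pr (uMat (s * Complex.I))

/-- The subgroup `U = {u_t : t ∈ ℝ}` as a subset of `PSL(2,ℂ)`. -/
def Uset : Set PSL2C := Set.range uu

/-- The subgroup `V = {v_s : s ∈ ℝ}` as a subset of `PSL(2,ℂ)`. -/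
def Vset : Set PSL2C := Set.range vv

/-- The subgroup `N = {π [[1, z],[0,1]] : z ∈ ℂ}` as a subset of `PSL(2,ℂ)`. -/
def Nset : Set PSL2C := {x | ∃ z : ℂ, x = pr (uMat z)}

/-- `H = π (SL(2,ℝ))`, the image in `PSL(2,ℂ)` of the real matrices. -/
def Hset : Set PSL2C :=
  {x | ∃ g : Matrix.SpecialLinearGroup (Fin 2) ℝ,
    x = pr (Matrix.SpecialLinearGroup.map (algebraMap ℝ ℂ) g)}

/-- The upper triangular matrix `[[a, z],[0, a⁻¹]]` as an element of `SL(2,ℂ)`,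
for a nonzero real `a`. -/
def tri (a : ℝ) (ha : a ≠ 0) (z : ℂ) : SL2C :=
  ⟨!![(a : ℂ), z; 0, (a : ℂ)⁻¹], by
    have h : (a : ℂ) ≠ 0 := by exact_mod_cast ha
    simp [Matrix.det_fin_two_of, mul_inv_cancel₀ h]⟩

/-- `AN = {π [[a, z],[0, a⁻¹]] : a > 0 real, z ∈ ℂ}`. -/
def ANset : Set PSL2C := {x | ∃ (a : ℝ) (ha : 0 < a) (z : ℂ), x = pr (tri a ha.ne' z)}

/-- `AV = {π [[a, ib],[0, a⁻¹]] : a > 0 real, b ∈ ℝ}`. -/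
def AVset : Set PSL2C :=
  {x | ∃ (a : ℝ) (ha : 0 < a) (b : ℝ), x = pr (tri a ha.ne' (b * Complex.I))}

/-- `A = {π diag(a, a⁻¹) : a > 0 real}`. -/
def Aset : Set PSL2C := {x | ∃ (a : ℝ) (ha : 0 < a), x = pr (tri a ha.ne' 0)}

variable (Γ : Subgroup PSL2C)

/-- The space `Γ\\G` of right cosets `Γg`, with the quotient topology. -/
abbrev XΓ := Quotient (QuotientGroup.rightRel Γ)

/-- The natural projection `G → Γ\\G`. -/
def mkX (g : PSL2C) : XΓ Γ := Quotient.mk'' g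

/-- The right translation action of `G` on `Γ\\G`: `(Γg₀)·g = Γ(g₀g)`. -/
def act (x : XΓ Γ) (g : PSL2C) : XΓ Γ :=
  Quotient.map' (fun h => h * g)
    (fun a b hab => by
      rw [QuotientGroup.rightRel_apply] at hab ⊢
      simpa [_root_.mul_inv_rev, mul_assoc] using hab) x

/-- The orbit `xS = {x·s : s ∈ S}` of a point `x ∈ Γ\\G` under a subset `S ⊆ G`. -/
def orb (x : XΓ Γ) (S : Set PSL2C) : Set (XΓ Γ) := (fun s => act Γ x s) '' S

/-- `Γ` is a lattice in `G`: there is a nonzero finite Borel measure on `Γ\\G`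
invariant under the right translation action of `G`. -/
def IsLattice : Prop :=
  letI : MeasurableSpace (XΓ Γ) := borel _
  ∃ μ : MeasureTheory.Measure (XΓ Γ), μ ≠ 0 ∧ MeasureTheory.IsFiniteMeasure μ ∧
    ∀ g : PSL2C, MeasureTheory.Measure.map (fun x => act Γ x g) μ = μ


/-- The topological `limsup` of a sequence of subsets of a topological space:
the set of points `x` such that every neighborhood of `x` meets `Q n` for
infinitely many `n`. -/
def seqLimsup {α : Type*} [TopologicalSpace α] (Q : ℕ → Set α) : Set α :=
  {x | ∀ O ∈ nhds x, {n | (O ∩ Q n).Nonempty}.Infinite}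


/-- A sequence `T : ℕ → Set ℝ` has accumulating renormalizations if for every
sequence `λ_n → +∞` of positive reals, the set `T_∞ = limsup_n λ_n⁻¹ T_n`
contains a sequence of nonzero elements tending to `0`, as well as a sequence
whose absolute values tend to `+∞`. -/
def HasAccumulatingRenormalizations (T : ℕ → Set ℝ) : Prop :=
  ∀ lam : ℕ → ℝ, (∀ n, 0 < lam n) → Tendsto lam atTop atTop →
    (∃ s : ℕ → ℝ,
      (∀ k, s k ∈ seqLimsup (fun n => (fun t => (lam n)⁻¹ * t) '' T n) ∧ s k ≠ 0) ∧
      Tendsto s atTop (nhds 0)) ∧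
    (∃ s : ℕ → ℝ,
      (∀ k, s k ∈ seqLimsup (fun n => (fun t => (lam n)⁻¹ * t) '' T n)) ∧
      Tendsto (fun k => |s k|) atTop atTop)

/-- A single subset `T ⊆ ℝ` has accumulating renormalizations if the constant
sequence `T_n = T` does. -/
def HasAccumulatingRenormalizationsSet (T : Set ℝ) : Prop :=
  HasAccumulatingRenormalizations (fun _ => T)


/-- `Y` is `U`-minimal with respect to the compact set `W`: `Y` is closed,
`U`-invariant, meets `W`, and for every `y ∈ Y ∩ W` the orbit `yU` is dense
in `Y`. -/
def UMinimalWrt (Y W : Set (XΓ Γ)) : Prop :=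
  IsClosed Y ∧ {y | ∃ x ∈ Y, ∃ t : ℝ, y = act Γ x (uu t)} = Y ∧ (Y ∩ W).Nonempty ∧
    ∀ y ∈ Y ∩ W, Y ⊆ closure {z | ∃ t : ℝ, z = act Γ y (uu t)}


/-- The choice of return times. -/
lemma choose_times (T : Set ℝ) (hT : HasAccumulatingRenormalizationsSet T)
    (γ q : ℕ → ℝ) (hγ : Tendsto γ atTop (nhds 0)) (hq : Tendsto q atTop (nhds 0))
    (hne : ∀ n, γ n ≠ 0 ∨ q n ≠ 0) :
    ∃ (k : ℕ → ℕ) (t : ℕ → ℝ) (η : ℝ), Tendsto k atTop atTop ∧ (∀ j, t j ∈ T) ∧ η ≠ 0 ∧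
      Tendsto (fun j => t j * γ (k j)) atTop (nhds 0) ∧
      Tendsto (fun j => 2 * t j * q (k j) - (t j) ^ 2 * γ (k j)) atTop (nhds η) := by
  set m : ℕ → ℝ := fun n => max |q n| (Real.sqrt |γ n|) with hm
  have mpos : ∀ n, 0 < m n := by
    intro n
    rcases hne n with h | h
    · exact lt_max_of_lt_right (Real.sqrt_pos.mpr (abs_pos.mpr h))
    · exact lt_max_of_lt_left (abs_pos.mpr h)
  have m0 : Tendsto m atTop (nhds 0) := by
    have h1 : Tendsto (fun n => |q n|) atTop (nhds 0) := by simpa using hq.abs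
    have h2 : Tendsto (fun n => Real.sqrt |γ n|) atTop (nhds 0) := by
      simpa using (hγ.abs).sqrt
    simpa using h1.max h2
  set L : ℕ → ℝ := fun n => (m n)⁻¹ with hL
  have Lpos : ∀ n, 0 < L n := fun n => inv_pos.mpr (mpos n)
  have Linf : Tendsto L atTop atTop :=
    (tendsto_nhdsWithin_iff.mpr ⟨m0, Eventually.of_forall mpos⟩).inv_tendsto_nhdsGT_zero
  have mL : ∀ n, m n * L n = 1 := fun n => mul_inv_cancel₀ (mpos n).ne'
  -- bounded coefficients
  have hA : ∀ n, |L n * q n| ≤ 1 := by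
    intro n
    rw [abs_mul, abs_of_pos (Lpos n)]
    have : |q n| ≤ m n := le_max_left _ _
    nlinarith [mL n, Lpos n]
  have hgm : ∀ n, |γ n| ≤ m n ^ 2 := by
    intro n
    have : Real.sqrt |γ n| ≤ m n := le_max_right _ _
    nlinarith [Real.sq_sqrt (abs_nonneg (γ n)), Real.sqrt_nonneg |γ n|]
  have hB : ∀ n, |L n ^ 2 * γ n| ≤ 1 := by
    intro n
    rw [abs_mul, abs_of_pos (pow_pos (Lpos n) 2)]
    calc L n ^ 2 * |γ n| ≤ L n ^ 2 * m n ^ 2 := by gcongr; exact hgm n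
      _ = (m n * L n) ^ 2 := by ring
      _ = 1 := by rw [mL n]; norm_num
  have hAB : ∀ n, 1 ≤ |L n * q n| + |L n ^ 2 * γ n| := by
    intro n
    rw [abs_mul, abs_of_pos (Lpos n), abs_mul, abs_of_pos (pow_pos (Lpos n) 2)]
    rcases max_choice |q n| (Real.sqrt |γ n|) with h | h
    · have h' : m n = |q n| := h
      have := mL n
      rw [h'] at this
      have h3 : 0 ≤ L n ^ 2 * |γ n| := by positivity
      linarith
    · have h' : m n = Real.sqrt |γ n| := h
      have h2 : m n ^ 2 = |γ n| := by rw [h', Real.sq_sqrt (abs_nonneg _)]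
      have h4 : L n ^ 2 * |γ n| = 1 := by
        rw [← h2, ← mul_pow, mul_comm, mL n, one_pow]
      have h3 : 0 ≤ L n * |q n| := mul_nonneg (Lpos n).le (abs_nonneg _)
      linarith
  -- pass to a convergent subsequence
  have hcpt : IsCompact (Set.Icc (-1 : ℝ) 1 ×ˢ Set.Icc (-1 : ℝ) 1) :=
    isCompact_Icc.prod isCompact_Icc
  obtain ⟨⟨A, B⟩, -, φ, hφ, hlim⟩ := hcpt.tendsto_subseq
    (x := fun n => (L n * q n, L n ^ 2 * γ n))
    (fun n => ⟨abs_le.mp (hA n), abs_le.mp (hB n)⟩)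
  have limA : Tendsto (fun n => L (φ n) * q (φ n)) atTop (nhds A) :=
    (continuous_fst.tendsto _).comp hlim
  have limB : Tendsto (fun n => L (φ n) ^ 2 * γ (φ n)) atTop (nhds B) :=
    (continuous_snd.tendsto _).comp hlim
  have hAB' : 1 ≤ |A| + |B| :=
    ge_of_tendsto (limA.abs.add limB.abs) (Eventually.of_forall fun n => hAB (φ n))
  obtain ⟨⟨s, hs, s0⟩, -⟩ := hT (fun n => L (φ n)) (fun n => Lpos _)
    (Linf.comp hφ.tendsto_atTop)
  -- pick `s` not a root
  obtain ⟨i, hi⟩ : ∃ i, 2 * s i * A - (s i) ^ 2 * B ≠ 0 := by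
    by_contra! hcon
    have h1 : ∀ i, 2 * A = s i * B := by
      intro i
      have := hcon i
      have h2 : s i * (2 * A - s i * B) = 0 := by linarith
      rcases mul_eq_zero.mp h2 with h | h
      · exact absurd h (hs i).2
      · linarith
    have hA0 : 2 * A = 0 := by
      have h3 : Tendsto (fun i => s i * B) atTop (nhds (0 * B)) := s0.mul_const B
      have h4 : Tendsto (fun _ : ℕ => 2 * A) atTop (nhds (0 * B)) := by
        refine h3.congr fun i => (h1 i).symm
      simpa using tendsto_nhds_unique tendsto_const_nhds h4
    have hA1 : A = 0 := by linarith
    have hB1 : B = 0 := by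
      have := h1 0
      rw [hA0] at this
      rcases mul_eq_zero.mp this.symm with h | h
      · exact absurd h (hs 0).2
      · exact h
    rw [hA1, hB1] at hAB'
    norm_num at hAB'
  set σ := s i
  have hσ := (hs i).1
  have key : ∀ j : ℕ, ∃ n, j ≤ n ∧ ∃ t ∈ T, |(L (φ n))⁻¹ * t - σ| < 1 / ((j : ℝ) + 1) := by
    intro j
    have hinf := hσ (Metric.ball σ (1 / ((j : ℝ) + 1))) (Metric.ball_mem_nhds _ (by positivity))
    obtain ⟨n, hn, hjn⟩ := hinf.exists_gt j
    obtain ⟨x, hx, t, ht, rfl⟩ := hn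
    exact ⟨n, hjn.le, t, ht, by simpa [Real.dist_eq] using hx⟩
  choose n hn t ht hclose using key
  have nInf : Tendsto n atTop atTop := tendsto_atTop_mono hn tendsto_id
  have slim : Tendsto (fun j => (L (φ (n j)))⁻¹ * t j) atTop (nhds σ) := by
    rw [tendsto_iff_dist_tendsto_zero]
    refine squeeze_zero (fun _ => dist_nonneg) (fun j => ?_) tendsto_one_div_add_atTop_nhds_zero_nat
    rw [Real.dist_eq]; exact (hclose j).le
  have limA' := limA.comp nInf
  have limB' := limB.comp nInf
  have Linv : Tendsto (fun j => (L (φ (n j)))⁻¹) atTop (nhds 0) :=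
    (Linf.comp (hφ.tendsto_atTop.comp nInf)).inv_tendsto_atTop
  refine ⟨fun j => φ (n j), t, 2 * σ * A - σ ^ 2 * B, hφ.tendsto_atTop.comp nInf, ht, hi, ?_, ?_⟩
  · have := (slim.mul Linv).mul limB'
    simp only [mul_zero, zero_mul] at this
    refine this.congr fun j => ?_
    have := (Lpos (φ (n j))).ne'
    simp only [Function.comp]
    field_simp
  · have := ((slim.const_mul 2).mul limA').sub ((slim.pow 2).mul limB')
    refine this.congr fun j => ?_
    have := (Lpos (φ (n j))).ne'
    simp only [Function.comp]
    field_simp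

/-- Complex conjugation on `SL(2,ℂ)`. -/
def cj : SL2C →* SL2C := Matrix.SpecialLinearGroup.map (starRingEnd ℂ)

lemma cj_apply (g : SL2C) (i j : Fin 2) : (cj g).1 i j = starRingEnd ℂ (g.1 i j) := rfl

lemma cj_cj (g : SL2C) : cj (cj g) = g := by
  ext i j
  exact Complex.conj_conj (g.1 i j)

lemma real_of_cj (g : SL2C) (h : cj g = g) :
    ∃ r : Matrix.SpecialLinearGroup (Fin 2) ℝ,
      Matrix.SpecialLinearGroup.map (algebraMap ℝ ℂ) r = g := by
  have he : ∀ i j, ((g.1 i j).re : ℂ) = g.1 i j := by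
    intro i j
    apply Complex.conj_eq_iff_re.mp
    rw [← cj_apply, h]
  refine ⟨⟨Matrix.of fun i j => (g.1 i j).re, ?_⟩, ?_⟩
  · have hd := g.2
    rw [Matrix.det_fin_two] at hd ⊢
    simp only [Matrix.of_apply]
    have : (((g.1 0 0).re * (g.1 1 1).re - (g.1 0 1).re * (g.1 1 0).re : ℝ) : ℂ) = 1 := by
      push_cast
      rw [he, he, he, he]
      exact hd
    exact_mod_cast this
  · ext i j
    exact he i j

/-- Twisted square. -/
def Msq (g : SL2C) : SL2C := g * (cj g)⁻¹

lemma Msq_cj (g : SL2C) : Msq g * cj (Msq g) = 1 := by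
  simp [Msq, cj_cj]

lemma cj_uMat (z : ℂ) : cj (uMat z) = uMat (starRingEnd ℂ z) := by
  ext i j
  rw [show (cj (uMat z)) i j = starRingEnd ℂ ((uMat z).1 i j) from rfl]
  fin_cases i <;> fin_cases j <;> simp [uMat]

lemma uMat_mul (z w : ℂ) : uMat z * uMat w = uMat (z + w) := by
  ext i j
  rw [Matrix.SpecialLinearGroup.coe_mul]
  fin_cases i <;> fin_cases j <;> simp [uMat, Matrix.mul_apply, Fin.sum_univ_two, add_comm]

lemma uMat_zero : uMat 0 = 1 := by
  ext i j
  fin_cases i <;> fin_cases j <;> simp [uMat]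

lemma uMat_inv (z : ℂ) : (uMat z)⁻¹ = uMat (-z) := by
  rw [inv_eq_iff_mul_eq_one, uMat_mul, add_neg_cancel, uMat_zero]

lemma Msq_u (g : SL2C) (t : ℝ) : Msq (uMat (-t) * g) = uMat (-t) * Msq g * uMat t := by
  simp [Msq, cj_uMat, uMat_inv, mul_assoc]

lemma Msq_entries (g : SL2C) : ∃ (p : ℂ) (β γ : ℝ),
    (Msq g).1 = !![p, β * Complex.I; γ * Complex.I, starRingEnd ℂ p] := by
  refine ⟨g.1 0 0 * starRingEnd ℂ (g.1 1 1) - g.1 0 1 * starRingEnd ℂ (g.1 1 0),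
    2 * (g.1 0 1 * starRingEnd ℂ (g.1 0 0)).im, 2 * (g.1 1 0 * starRingEnd ℂ (g.1 1 1)).im, ?_⟩
  have : (Msq g).1 = g.1 * (cj g).1.adjugate := by
    simp [Msq, Matrix.SpecialLinearGroup.coe_mul, Matrix.SpecialLinearGroup.coe_inv]
  rw [this, Matrix.adjugate_fin_two]
  ext i j
  rw [Matrix.mul_apply]
  fin_cases i <;> fin_cases j <;> simp [cj_apply, Complex.ext_iff] <;> (try constructor) <;> ring

/-- Hilbert 90. -/
lemma hilbert90 (M : SL2C) (hM : M * cj M = 1) (v : SL2C)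
    (hpos : 0 < (v.1 + M.1 * (cj v).1).det.re) :
    ∃ w : SL2C, w.1 = ((Real.sqrt (v.1 + M.1 * (cj v).1).det.re : ℂ))⁻¹ • (v.1 + M.1 * (cj v).1) ∧
      M * cj w = w := by
  set m := v.1 + M.1 * (cj v).1 with hm
  set C := (starRingEnd ℂ).mapMatrix (m := Fin 2) with hC
  have hMM : M.1 * C M.1 = 1 := congrArg Subtype.val hM
  have hcv : (cj v).1 = C v.1 := rfl
  have hCC : C (C v.1) = v.1 := congrArg Subtype.val (cj_cj v)
  have hmm : M.1 * C m = m := by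
    rw [hm, hcv, map_add, map_mul, hCC, mul_add, ← mul_assoc, hMM, one_mul, add_comm]
  have hdet : m.det = starRingEnd ℂ m.det := by
    conv_lhs => rw [← hmm]
    rw [Matrix.det_mul, M.2, one_mul, hC, ← RingHom.map_det]
  have hre : ((m.det.re : ℝ) : ℂ) = m.det := Complex.conj_eq_iff_re.mp hdet.symm
  have hs : Real.sqrt m.det.re ≠ 0 := (Real.sqrt_pos.mpr hpos).ne'
  have hs2 : (Real.sqrt m.det.re : ℂ) ^ 2 = m.det := by
    rw [← Complex.ofReal_pow, Real.sq_sqrt hpos.le, hre]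
  have hsC : (Real.sqrt m.det.re : ℂ) ≠ 0 := by exact_mod_cast hs
  refine ⟨⟨((Real.sqrt m.det.re : ℂ))⁻¹ • m, ?_⟩, rfl, ?_⟩
  · rw [Matrix.det_smul, Fintype.card_fin, inv_pow, hs2, inv_mul_cancel₀]
    rw [← hs2]
    exact pow_ne_zero 2 hsC
  · apply Subtype.ext
    change M.1 * C (((Real.sqrt m.det.re : ℂ))⁻¹ • m) = ((Real.sqrt m.det.re : ℂ))⁻¹ • m
    have : C (((Real.sqrt m.det.re : ℂ))⁻¹ • m) = ((Real.sqrt m.det.re : ℂ))⁻¹ • C m := by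
      ext i j
      simp [hC]
    rw [this, Matrix.mul_smul, hmm]

lemma continuous_cj : Continuous cj := by
  refine Continuous.subtype_mk ?_ _
  refine continuous_pi fun i => continuous_pi fun j => ?_
  exact Complex.continuous_conj.comp
    ((continuous_apply j).comp ((continuous_apply i).comp continuous_subtype_val))

lemma straighten (g : ℕ → SL2C) (η : ℝ)
    (h : Tendsto (fun n => Msq (g n)) atTop (nhds (uMat (η * Complex.I)))) :
    ∃ r : ℕ → Matrix.SpecialLinearGroup (Fin 2) ℝ,
      Tendsto (fun n => g n * Matrix.SpecialLinearGroup.map (algebraMap ℝ ℂ) (r n)) atTop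
        (nhds (uMat ((η / 2 : ℝ) * Complex.I))) := by
  set v := uMat ((η / 2 : ℝ) * Complex.I) with hv
  have hlim : Tendsto (fun n => v.1 + (Msq (g n)).1 * (cj v).1) atTop (nhds ((2 : ℂ) • v.1)) := by
    have h1 : Tendsto (fun n => (Msq (g n)).1) atTop (nhds (uMat (η * Complex.I)).1) :=
      (continuous_subtype_val.tendsto _).comp h
    have h2 : Tendsto (fun n => v.1 + (Msq (g n)).1 * (cj v).1) atTop
        (nhds (v.1 + (uMat (η * Complex.I)).1 * (cj v).1)) :=
      (h1.mul_const _).const_add _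
    have h3 : uMat (η * Complex.I) * cj v = v := by
      rw [hv, cj_uMat, uMat_mul]
      congr 1
      simp only [map_mul, Complex.conj_ofReal, Complex.conj_I]
      push_cast
      ring
    have h4 : (uMat (η * Complex.I)).1 * (cj v).1 = v.1 := congrArg Subtype.val h3
    rwa [h4, ← two_smul ℂ] at h2
  have hdet : Tendsto (fun n => (v.1 + (Msq (g n)).1 * (cj v).1).det.re) atTop (nhds 4) := by
    have h5 : Continuous fun A : Matrix (Fin 2) (Fin 2) ℂ => A.det.re :=
      Complex.continuous_re.comp (continuous_id.matrix_det)
    have := (h5.tendsto _).comp hlim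
    have h6 : ((2 : ℂ) • v.1).det.re = 4 := by
      rw [Matrix.det_smul, Fintype.card_fin, v.2]
      norm_num
    rwa [h6] at this
  have hpos := hdet.eventually (lt_mem_nhds (show (0 : ℝ) < 4 by norm_num))
  have hex : ∀ n, ∃ r : Matrix.SpecialLinearGroup (Fin 2) ℝ,
      0 < (v.1 + (Msq (g n)).1 * (cj v).1).det.re →
      (g n * Matrix.SpecialLinearGroup.map (algebraMap ℝ ℂ) r).1 =
        ((Real.sqrt (v.1 + (Msq (g n)).1 * (cj v).1).det.re : ℂ))⁻¹ •
          (v.1 + (Msq (g n)).1 * (cj v).1) := by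
    intro n
    by_cases hp : 0 < (v.1 + (Msq (g n)).1 * (cj v).1).det.re
    · obtain ⟨w, hw, hMw⟩ := hilbert90 (Msq (g n)) (Msq_cj _) v hp
      obtain ⟨r, hr⟩ := real_of_cj ((g n)⁻¹ * w) (by
        rw [map_mul, map_inv]
        have : g n * ((cj (g n))⁻¹ * cj w) = w := by
          rw [← mul_assoc]; exact hMw
        rw [eq_inv_mul_iff_mul_eq]
        exact this)
      refine ⟨r, fun _ => ?_⟩
      rw [hr, mul_inv_cancel_left, hw]
    · exact ⟨1, fun h => absurd h hp⟩
  choose r hr using hex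
  refine ⟨r, ?_⟩
  refine tendsto_subtype_rng.mpr ?_
  have hsq : Tendsto (fun n => ((Real.sqrt (v.1 + (Msq (g n)).1 * (cj v).1).det.re : ℂ))⁻¹)
      atTop (nhds (2 : ℂ)⁻¹) := by
    have h7 : Real.sqrt 4 = 2 := by
      rw [show (4 : ℝ) = 2 ^ 2 by norm_num]; exact Real.sqrt_sq (by norm_num)
    have h8 := (Complex.continuous_ofReal.tendsto _).comp hdet.sqrt
    rw [h7] at h8
    exact h8.inv₀ (by norm_num)
  have hfin := hsq.smul hlim
  rw [inv_smul_smul₀ (by norm_num : (2 : ℂ) ≠ 0)] at hfin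
  refine hfin.congr' ?_
  filter_upwards [hpos] with n hn
  exact (hr n hn).symm

instance : IsTopologicalGroup SL2C :=
  Matrix.SpecialLinearGroup.topologicalGroup (n := Fin 2) (R := ℂ)

instance : IsTopologicalGroup PSL2C :=
  QuotientGroup.instIsTopologicalGroup (Subgroup.center SL2C)

lemma continuous_Msq : Continuous Msq :=
  continuous_id.mul continuous_cj.inv

lemma uMat_entries (M : SL2C) (t : ℝ) (p : ℂ) (β γ : ℝ)
    (hM : M.1 = !![p, β * Complex.I; γ * Complex.I, starRingEnd ℂ p]) :
    (uMat (-t) * M * uMat t).1 =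
      !![p - (t * γ : ℝ) * Complex.I, ((β + (2 * t * p.im - t ^ 2 * γ) : ℝ) : ℂ) * Complex.I;
        γ * Complex.I, starRingEnd ℂ p + (t * γ : ℝ) * Complex.I] := by
  have h : (uMat (-t) * M * uMat t).1 = (uMat (-t)).1 * M.1 * (uMat t).1 := rfl
  rw [h, hM]
  ext i j
  fin_cases i <;> fin_cases j <;>
    simp [uMat, Matrix.mul_apply, Fin.sum_univ_two, Complex.ext_iff, pow_two] <;>
    (try constructor) <;> ring

lemma continuous_pr : Continuous pr := continuous_quotient_mk'

lemma isOpenMap_pr : IsOpenMap pr := QuotientGroup.isOpenMap_coe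

lemma pr_surj : Function.Surjective pr := QuotientGroup.mk'_surjective _

lemma isOpenMap_mkX : IsOpenMap (mkX Γ) := isOpenMap_quotient_mk'_mul (Γ := Γ) (T := PSL2C)

lemma continuous_mkX : Continuous (mkX Γ) := continuous_quotient_mk'

lemma mkX_surj : Function.Surjective (mkX Γ) := Quotient.mk''_surjective

lemma act_mk (a g : PSL2C) : act Γ (mkX Γ a) g = mkX Γ (a * g) := rfl

lemma act_mul (x : XΓ Γ) (g h : PSL2C) : act Γ (act Γ x g) h = act Γ x (g * h) := by
  obtain ⟨a, rfl⟩ := mkX_surj Γ x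
  simp only [act_mk, mul_assoc]

lemma act_one (x : XΓ Γ) : act Γ x 1 = x := by
  obtain ⟨a, rfl⟩ := mkX_surj Γ x
  simp only [act_mk, mul_one]

lemma continuous_act : Continuous fun p : XΓ Γ × PSL2C => act Γ p.1 p.2 := by
  have hq : Topology.IsQuotientMap (Prod.map (mkX Γ) (id : PSL2C → PSL2C)) :=
    ((isOpenMap_mkX Γ).prodMap IsOpenMap.id).isQuotientMap
      ((continuous_mkX Γ).prodMap continuous_id) ((mkX_surj Γ).prodMap Function.surjective_id)
  rw [hq.continuous_iff]
  exact (continuous_mkX Γ).comp continuous_mul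

lemma continuous_act_right (g : PSL2C) : Continuous fun x : XΓ Γ => act Γ x g :=
  (continuous_act Γ).comp (continuous_id.prodMk continuous_const)

lemma act_nhds (x : XΓ Γ) (O : Set SL2C) (hO : O ∈ nhds 1) :
    (fun g => act Γ x (pr g)) '' O ∈ nhds x := by
  obtain ⟨a, rfl⟩ := mkX_surj Γ x
  have hopen : IsOpenMap fun g : SL2C => act Γ (mkX Γ a) (pr g) :=
    (isOpenMap_mkX Γ).comp ((isOpenMap_mul_left a).comp isOpenMap_pr)
  have := hopen.image_mem_nhds hO
  simpa [act_one] using this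

lemma uu_mem_H (t : ℝ) : uu t ∈ Hset := by
  refine ⟨⟨!![1, t; 0, 1], by simp [Matrix.det_fin_two_of]⟩, ?_⟩
  rw [uu]
  congr 1
  ext i j
  change (uMat t).1 i j = (((!![1, t; 0, 1] : Matrix (Fin 2) (Fin 2) ℝ) i j : ℝ) : ℂ)
  fin_cases i <;> fin_cases j <;> simp [uMat]

lemma vv_ne_one (s : ℝ) (hs : s ≠ 0) : vv s ≠ 1 := by
  intro h
  have h1 : uMat (s * Complex.I) ∈ Subgroup.center SL2C :=
    (QuotientGroup.eq_one_iff _).mp h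
  rw [Matrix.SpecialLinearGroup.mem_center_iff] at h1
  obtain ⟨r, -, hr⟩ := h1
  have := congrFun (congrFun hr 0) 1
  simp [uMat] at this
  exact hs this

lemma uu_vv (t s : ℝ) : uu t * vv s = vv s * uu t := by
  rw [uu, vv, ← map_mul, ← map_mul, uMat_mul, uMat_mul, add_comm]

lemma translate_of_point (X : Set (XΓ Γ)) (hXclosed : IsClosed X)
    (hXH : ∀ x ∈ X, ∀ h ∈ Hset, act Γ x h ∈ X) (Y W : Set (XΓ Γ)) (hY : UMinimalWrt Γ Y W)
    (y : XΓ Γ) (hy : y ∈ Y ∩ W) (s : ℝ) (hs : act Γ y (vv s) ∈ X) :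
    ∀ z ∈ Y, act Γ z (vv s) ∈ X := by
  have hcl : IsClosed {z | act Γ z (vv s) ∈ X} := hXclosed.preimage (continuous_act_right Γ _)
  intro z hz
  refine closure_minimal ?_ hcl (hY.2.2.2 y hy hz)
  rintro _ ⟨t, rfl⟩
  change act Γ (act Γ y (uu t)) (vv s) ∈ X
  rw [act_mul, uu_vv, ← act_mul]
  exact hXH _ hs _ (uu_mem_H t)

/-- One translate of a relatively minimal set inside `X`: under the stated
recurrence hypotheses, if `Y ⊆ X` is `U`-minimal with respect to `W` and
`X ∖ y₀H` is not closed for some `y₀ ∈ Y ∩ W`, then `Y·v ⊆ X` for some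
nontrivial `v ∈ V`. -/
theorem one_translate_of_relative_minimal_set_in_X
    (Γ : Subgroup PSL2C) (hdisc : DiscreteTopology Γ)
    (X : Set (XΓ Γ)) (hXclosed : IsClosed X)
    (hXinv : {y | ∃ x ∈ X, ∃ h ∈ Hset, y = act Γ x h} = X)
    (hXnoperiodic : ¬ ∃ x ∈ X, ∃ t : ℝ, t ≠ 0 ∧ act Γ x (uu t) = x)
    (W : Set (XΓ Γ)) (hWcpt : IsCompact W) (hXW : (X ∩ W).Nonempty)
    (hret : ∀ y ∈ X ∩ W,
      HasAccumulatingRenormalizationsSet {t : ℝ | act Γ y (uu t) ∈ W})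
    (Y : Set (XΓ Γ)) (hYX : Y ⊆ X) (hY : UMinimalWrt Γ Y W)
    (y₀ : XΓ Γ) (hy₀ : y₀ ∈ Y ∩ W) (hnc : ¬ IsClosed (X \ orb Γ y₀ Hset)) :
    ∃ v ∈ Vset, v ≠ 1 ∧ ∀ y ∈ Y, act Γ y v ∈ X := by
  have hXH : ∀ x ∈ X, ∀ h ∈ Hset, act Γ x h ∈ X := by
    intro x hx h hh
    rw [← hXinv]
    exact ⟨x, hx, h, hh, rfl⟩
  obtain ⟨hYc, hYU, -, -⟩ := id hY
  -- `y₀` is a limit of points of `X` outside `y₀H`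
  have hcl : y₀ ∈ closure (X \ orb Γ y₀ Hset) := by
    have hns : ¬ closure (X \ orb Γ y₀ Hset) ⊆ X \ orb Γ y₀ Hset := fun h =>
      hnc (isClosed_of_closure_subset h)
    obtain ⟨z, hz, hz'⟩ := Set.not_subset.mp hns
    have hzX : z ∈ X := closure_minimal Set.sdiff_subset hXclosed hz
    have hzo : z ∈ orb Γ y₀ Hset := by
      by_contra hcon
      exact hz' ⟨hzX, hcon⟩
    obtain ⟨h, ⟨r, rfl⟩, rfl⟩ := hzo
    set h := pr (Matrix.SpecialLinearGroup.map (algebraMap ℝ ℂ) r) with hh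
    have hinv : h⁻¹ ∈ Hset := ⟨r⁻¹, by rw [hh, map_inv, map_inv]⟩
    have := map_mem_closure (continuous_act_right Γ h⁻¹) hz (t := X \ orb Γ y₀ Hset) (by
      rintro x ⟨hx, hxo⟩
      refine ⟨hXH x hx _ hinv, ?_⟩
      rintro ⟨_, ⟨r', rfl⟩, hk⟩
      apply hxo
      refine ⟨_, ⟨r' * r, rfl⟩, ?_⟩
      change act Γ y₀ _ = act Γ x h⁻¹ at hk
      change act Γ y₀ _ = x
      rw [map_mul, map_mul, ← act_mul, hk, act_mul, ← hh, inv_mul_cancel, act_one])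
    change act Γ (act Γ y₀ h) h⁻¹ ∈ _ at this
    rwa [act_mul, mul_inv_cancel, act_one] at this
  -- a sequence
  have hMc : Continuous fun g : SL2C => (Msq g).1 :=
    continuous_subtype_val.comp continuous_Msq
  have hM1 : Msq 1 = 1 := by simp [Msq]
  set S : Set SL2C := {g | 0 < ((Msq g).1 0 0).re ∧ act Γ y₀ (pr g) ∈ X \ orb Γ y₀ Hset} with hS
  have h1S : (1 : SL2C) ∈ closure S := by
    rw [mem_closure_iff_nhds]
    intro O hO
    have hP : {g : SL2C | 0 < ((Msq g).1 0 0).re} ∈ nhds 1 := by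
      refine IsOpen.mem_nhds ?_ ?_
      · exact isOpen_lt continuous_const (Complex.continuous_re.comp
          ((continuous_apply 0).comp ((continuous_apply 0).comp hMc)))
      · simp [hM1]
    obtain ⟨_, ⟨g, hg, rfl⟩, hgX⟩ :=
      mem_closure_iff_nhds.mp hcl _ (act_nhds Γ y₀ _ (Filter.inter_mem hO hP))
    exact ⟨g, hg.1, hg.2, hgX⟩
  have : FirstCountableTopology (Matrix (Fin 2) (Fin 2) ℂ) :=
    inferInstanceAs (FirstCountableTopology (Fin 2 → Fin 2 → ℂ))
  have : FirstCountableTopology SL2C :=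
    TopologicalSpace.Subtype.firstCountableTopology
      {A : Matrix (Fin 2) (Fin 2) ℂ | A.det = 1}
  obtain ⟨g, hgS, hg1⟩ := mem_closure_iff_seq_limit.mp h1S
  choose p β γ hM using fun n => Msq_entries (g n)
  have hMlim : Tendsto (fun n => (Msq (g n)).1) atTop (nhds 1) := by
    have := (hMc.tendsto 1).comp hg1
    rw [hM1] at this
    exact this
  have hent : ∀ i j, Tendsto (fun n => (Msq (g n)).1 i j) atTop
      (nhds ((1 : Matrix (Fin 2) (Fin 2) ℂ) i j)) := fun i j =>
    tendsto_pi_nhds.mp (tendsto_pi_nhds.mp hMlim i) j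
  have hp : Tendsto p atTop (nhds 1) := by
    simpa [hM] using hent 0 0
  have hβ : Tendsto β atTop (nhds 0) := by
    have := (Complex.continuous_im.tendsto _).comp (hent 0 1)
    simpa [hM, Function.comp_def] using this
  have hγ : Tendsto γ atTop (nhds 0) := by
    have := (Complex.continuous_im.tendsto _).comp (hent 1 0)
    simpa [hM, Function.comp_def] using this
  have hq : Tendsto (fun n => (p n).im) atTop (nhds 0) := by
    simpa [Function.comp_def] using (Complex.continuous_im.tendsto _).comp hp
  by_cases hcase : ∃ n, γ n = 0 ∧ (p n).im = 0
  · -- the case `g ∈ VH`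
    obtain ⟨n, hγ0, hp0⟩ := hcase
    obtain ⟨hpos, hgX, hgo⟩ := hgS n
    have hpre : p n = ((p n).re : ℂ) := by
      apply Complex.ext <;> simp [hp0]
    have hMn := hM n
    rw [hγ0, hpre] at hMn
    have hp1 : (p n).re = 1 := by
      have hd := (Msq (g n)).2
      rw [hMn, Matrix.det_fin_two_of] at hd
      have hd' : (p n).re * (p n).re = 1 := by
        have : (((p n).re * (p n).re : ℝ) : ℂ) = 1 := by
          simpa using hd
        exact_mod_cast this
      have hpos' : 0 < (p n).re := by
        have := hpos
        rw [hM n] at this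
        simpa using this
      nlinarith
    have hMu : Msq (g n) = uMat (β n * Complex.I) := by
      apply Subtype.ext
      rw [hMn, hp1]
      simp [uMat]
    obtain ⟨r, hr⟩ := real_of_cj (uMat (-((β n / 2 : ℝ) * Complex.I)) * g n) (by
      have h1 : g n = uMat (β n * Complex.I) * cj (g n) := by
        rw [← hMu, Msq, inv_mul_cancel_right]
      conv_rhs => rw [h1]
      rw [map_mul, cj_uMat, ← mul_assoc, uMat_mul]
      congr 2
      simp only [map_mul, map_neg, Complex.conj_ofReal, Complex.conj_I]
      push_cast
      ring)
    have hgn : pr (g n) = vv (β n / 2) *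
        pr (Matrix.SpecialLinearGroup.map (algebraMap ℝ ℂ) r) := by
      rw [hr, vv, ← map_mul, ← mul_assoc, uMat_mul, add_neg_cancel, uMat_zero, one_mul]
    have hβ0 : β n / 2 ≠ 0 := by
      intro h0
      apply hgo
      refine ⟨_, ⟨r, rfl⟩, ?_⟩
      rw [hgn, h0, vv]
      simp [uMat_zero]
    refine ⟨vv (β n / 2), ⟨_, rfl⟩, vv_ne_one _ hβ0, ?_⟩
    refine translate_of_point Γ X hXclosed hXH Y W hY y₀ hy₀ _ ?_
    have hinv : (pr (Matrix.SpecialLinearGroup.map (algebraMap ℝ ℂ) r))⁻¹ ∈ Hset :=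
      ⟨r⁻¹, by rw [map_inv, map_inv]⟩
    have := hXH _ hgX _ hinv
    rwa [act_mul, hgn, mul_inv_cancel_right] at this
  · -- the polynomial divergence case
    have hne : ∀ n, γ n ≠ 0 ∨ (p n).im ≠ 0 := by
      intro n
      by_contra! hcon
      exact hcase ⟨n, hcon⟩
    obtain ⟨k, t, η, hk, htT, hη, hlim1, hlim2⟩ :=
      choose_times _ (hret y₀ ⟨hYX hy₀.1, hy₀.2⟩) γ (fun n => (p n).im) hγ hq hne
    have hMt : Tendsto (fun j => Msq (uMat (-t j) * g (k j))) atTop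
        (nhds (uMat (η * Complex.I))) := by
      refine tendsto_subtype_rng.mpr ?_
      have hpk := hp.comp hk
      have hβk := hβ.comp hk
      have hγk := hγ.comp hk
      have hl1 := (Complex.continuous_ofReal.tendsto _).comp hlim1
      have hl2 := (Complex.continuous_ofReal.tendsto _).comp (hβk.add hlim2)
      have hl3 := (Complex.continuous_ofReal.tendsto _).comp hγk
      have hcp := (Complex.continuous_conj.tendsto _).comp hpk
      have hfun : (fun j => (Msq (uMat (-t j) * g (k j))).1) = fun j =>
          !![p (k j) - (t j * γ (k j) : ℝ) * Complex.I,
            ((β (k j) + (2 * t j * (p (k j)).im - t j ^ 2 * γ (k j)) : ℝ) : ℂ) * Complex.I;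
            γ (k j) * Complex.I,
            starRingEnd ℂ (p (k j)) + (t j * γ (k j) : ℝ) * Complex.I] := by
        funext j
        rw [Msq_u, uMat_entries _ _ _ _ _ (hM (k j))]
      change Tendsto (fun j => (Msq (uMat (-t j) * g (k j))).1) atTop _
      rw [hfun]
      refine tendsto_pi_nhds.mpr fun a => tendsto_pi_nhds.mpr fun b => ?_
      fin_cases a <;> fin_cases b
      · simpa [uMat] using hpk.sub (hl1.mul_const Complex.I)
      · simpa [uMat] using hl2.mul_const Complex.I
      · simpa [uMat] using hl3.mul_const Complex.I
      · simpa [uMat] using hcp.add (hl1.mul_const Complex.I)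
    obtain ⟨r, hr⟩ := straighten _ η hMt
    have hprlim := (continuous_pr.tendsto _).comp hr
    -- the points `y₀ u_t` accumulate in `W`
    obtain ⟨y₁, hy₁W, hcp⟩ := hWcpt.exists_mapClusterPt_of_frequently (l := (atTop : Filter ℕ))
      (f := fun j => act Γ y₀ (uu (t j)))
      (Filter.Eventually.frequently (Filter.Eventually.of_forall fun j => htT j))
    obtain ⟨F, hF, hFlim⟩ := mapClusterPt_iff_ultrafilter.mp hcp
    have hy₁Y : y₁ ∈ Y := by
      refine hYc.mem_of_tendsto hFlim (Filter.Eventually.of_forall fun j => ?_)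
      rw [← hYU]
      exact ⟨y₀, hy₀.1, t j, rfl⟩
    have hv : act Γ y₁ (vv (η / 2)) ∈ X := by
      have h2 := ((continuous_act Γ).tendsto (y₁, vv (η / 2))).comp
        (hFlim.prodMk_nhds (hprlim.mono_left hF))
      refine hXclosed.mem_of_tendsto h2 (Filter.Eventually.of_forall fun j => ?_)
      change act Γ (act Γ y₀ (uu (t j))) (pr _) ∈ X
      rw [act_mul, uu, ← map_mul, ← mul_assoc, ← mul_assoc, uMat_mul, add_neg_cancel, uMat_zero,
        one_mul, map_mul, ← act_mul]
      exact hXH _ (hgS (k j)).2.1 _ ⟨r j, rfl⟩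
    exact ⟨vv (η / 2), ⟨_, rfl⟩, vv_ne_one _ (by simpa using hη),
      translate_of_point Γ X hXclosed hXH Y W hY y₁ ⟨hy₁Y, hy₁W⟩ _ hv⟩


end
end

section
/- In G = PSL(2,ℂ), one has {g ∈ G : g u_t g⁻¹ ∈ H for all t ∈ ℝ} = 𝒩V = {nv : n ∈ 𝒩, v ∈ V}, where 𝒩 denotes the normalizer of H in G. -/
open scoped MatrixGroups
open Matrix Filter

noncomputable section

variable (Γ : Subgroup PSL2C)

/-- The normalizer `𝒩 = {g ∈ G : gHg⁻¹ = H}` of `H` in `PSL(2,ℂ)`, as a set. -/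
def NmlH : Set PSL2C := {g | (fun h => g * h * g⁻¹) '' Hset = Hset}

lemma pr_mem_Hset_iff (x : SL2C) : pr x ∈ Hset ↔ ∀ i j, (x i j).im = 0 := by
  constructor
  · rintro ⟨g, hg⟩ i j
    have h1 : x⁻¹ * (Matrix.SpecialLinearGroup.map (algebraMap ℝ ℂ) g) ∈
        Subgroup.center SL2C := QuotientGroup.eq.mp hg
    obtain ⟨r, hr, hs⟩ := Matrix.SpecialLinearGroup.mem_center_iff.mp h1
    have h2 : (Matrix.SpecialLinearGroup.map (algebraMap ℝ ℂ) g : Matrix (Fin 2) (Fin 2) ℂ)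
        = (x : Matrix (Fin 2) (Fin 2) ℂ) * Matrix.scalar (Fin 2) r := by
      rw [hs, ← Matrix.SpecialLinearGroup.coe_mul, mul_inv_cancel_left]
    have h3 : ((g i j : ℝ) : ℂ) = x i j * r := by
      have := congrFun (congrFun h2 i) j
      simpa [Matrix.scalar_apply, Matrix.mul_diagonal] using this
    have hr' : r ^ 2 = 1 := by simpa using hr
    rcases (by simpa using hr' : r = 1 ∨ r = -1) with h | h
    all_goals
      have := (congrArg Complex.im h3).symm
      simpa [h] using this
  · intro h
    have hre : ∀ i j, (((x i j).re : ℝ) : ℂ) = x i j := fun i j =>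
      Complex.ext (by simp) (by simp [h])
    have hdet : x 0 0 * x 1 1 - x 0 1 * x 1 0 = 1 := by
      rw [← Matrix.det_fin_two]; exact x.2
    refine ⟨⟨!![(x 0 0).re, (x 0 1).re; (x 1 0).re, (x 1 1).re], ?_⟩, ?_⟩
    · rw [Matrix.det_fin_two_of]
      apply Complex.ofReal_injective
      push_cast
      rw [hre, hre, hre, hre, hdet]
    · congr 1
      ext i j
      fin_cases i <;> fin_cases j <;> exact (hre _ _).symm

lemma inv_entries (x : SL2C) : (x⁻¹) 0 0 = x 1 1 ∧ (x⁻¹) 0 1 = - x 0 1 ∧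
    (x⁻¹) 1 0 = - x 1 0 ∧ (x⁻¹) 1 1 = x 0 0 := by
  simp [Matrix.SpecialLinearGroup.coe_inv, Matrix.adjugate_fin_two]

lemma mul_entries (x y : SL2C) (i j : Fin 2) :
    (x * y) i j = x i 0 * y 0 j + x i 1 * y 1 j := by
  rw [Matrix.SpecialLinearGroup.coe_mul, Matrix.mul_apply, Fin.sum_univ_two]

lemma im_zero_of (z : ℂ) (h : z.im = 0) : ∃ r : ℝ, z = r :=
  ⟨z.re, Complex.ext (by simp) (by simp [h])⟩

/-- all products of two entries are real -/
def PP (x : SL2C) : Prop := ∀ i j k l, (x i j * x k l).im = 0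

lemma PP_inv (x : SL2C) (h : PP x) : PP x⁻¹ := by
  obtain ⟨h1, h2, h3, h4⟩ := inv_entries x
  intro i j k l
  fin_cases i <;> fin_cases j <;> fin_cases k <;> fin_cases l <;>
    simp only [Fin.zero_eta, Fin.mk_one, Fin.isValue, h1, h2, h3, h4, neg_mul, mul_neg,
      Complex.neg_im, h _ _ _ _, neg_zero]

lemma PP_conj (x y : SL2C) (h : PP x) (hy : ∀ i j, (y i j).im = 0) :
    ∀ i j, ((x * y * x⁻¹) i j).im = 0 := by
  obtain ⟨h1, h2, h3, h4⟩ := inv_entries x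
  have key : ∀ i j k l m n, (x i j * y m n * x k l).im = 0 := by
    intro i j k l m n
    rw [mul_right_comm, Complex.mul_im, h, hy]; simp
  intro i j
  fin_cases j <;>
    simp only [Fin.zero_eta, Fin.mk_one, Fin.isValue, mul_entries, h1, h2, h3, h4, add_mul,
      mul_neg, Complex.add_im, Complex.neg_im, key, neg_zero, add_zero]

lemma pr_surj_s17 (g : PSL2C) : ∃ x, pr x = g := QuotientGroup.mk'_surjective _ g

lemma PP_conj_mem (x : SL2C) (h : PP x) (k : PSL2C) (hk : k ∈ Hset) :
    pr x * k * (pr x)⁻¹ ∈ Hset := by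
  obtain ⟨y, rfl⟩ := pr_surj_s17 k
  rw [← map_inv, ← map_mul, ← map_mul, pr_mem_Hset_iff]
  exact PP_conj x y h ((pr_mem_Hset_iff y).mp hk)

lemma PP_mem (x : SL2C) (h : PP x) : pr x ∈ NmlH := by
  apply Set.Subset.antisymm
  · rintro _ ⟨k, hk, rfl⟩
    exact PP_conj_mem x h k hk
  · intro k hk
    refine ⟨(pr x)⁻¹ * k * pr x, ?_, by group⟩
    have := PP_conj_mem x⁻¹ (PP_inv x h) k hk
    simpa using this

lemma PP_of_real (x : SL2C) (h : ∀ i j, (x i j).im = 0) : PP x := by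
  intro i j k l
  simp [Complex.mul_im, h]

lemma PP_of_imag (x : SL2C) (h : ∀ i j, (x i j).re = 0) : PP x := by
  intro i j k l
  simp [Complex.mul_im, h]

lemma uMat_entries_s17 (z : ℂ) : uMat z 0 0 = 1 ∧ uMat z 0 1 = z ∧ uMat z 1 0 = 0 ∧
    uMat z 1 1 = 1 := by
  simp [uMat]

lemma exists_PP (x : SL2C) (h : ∀ i j, ((x * uMat 1 * x⁻¹) i j).im = 0) :
    ∃ s : ℝ, PP (x * uMat (-(s * Complex.I))) := by
  obtain ⟨h1, h2, h3, h4⟩ := inv_entries x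
  obtain ⟨u1, u2, u3, u4⟩ := uMat_entries_s17 1
  have hdet : x 0 0 * x 1 1 - x 0 1 * x 1 0 = 1 := by
    rw [← Matrix.det_fin_two]; exact x.2
  have e1 := h 0 1
  have e2 := h 1 0
  have e3 := h 0 0
  simp only [mul_entries, h1, h2, h3, h4, u1, u2, u3, u4] at e1 e2 e3
  have f1 : x 0 0 * 1 + x 0 1 * 0 = x 0 0 := by ring
  replace e1 : (x 0 0 * x 0 0).im = 0 := by
    rw [← e1]; congr 1; ring
  replace e2 : (x 1 0 * x 1 0).im = 0 := by
    rw [← neg_eq_zero, ← Complex.neg_im, ← e2]; congr 1; ring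
  replace e3 : (x 0 0 * x 1 0).im = 0 := by
    have : (x 0 0 * 1 + x 0 1 * 0) * x 1 1 + (x 0 0 * 1 + x 0 1 * 1) * -x 1 0
      = 1 - x 0 0 * x 1 0 := by linear_combination hdet
    rw [this] at e3
    rw [Complex.sub_im, Complex.one_im] at e3
    linarith
  have d1 := congrArg Complex.re hdet
  have d2 := congrArg Complex.im hdet
  simp only [Complex.sub_re, Complex.sub_im, Complex.mul_re, Complex.mul_im, Complex.one_re,
    Complex.one_im] at d1 d2 e1 e2 e3
  have cases : ((x 0 0).im = 0 ∧ (x 1 0).im = 0) ∨ ((x 0 0).re = 0 ∧ (x 1 0).re = 0) := by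
    have e1' : (x 0 0).re = 0 ∨ (x 0 0).im = 0 := by
      rw [← mul_eq_zero]; linarith
    have e2' : (x 1 0).re = 0 ∨ (x 1 0).im = 0 := by
      rw [← mul_eq_zero]; linarith
    rcases e1' with p | p <;> rcases e2' with q | q
    · exact Or.inr ⟨p, q⟩
    · simp only [p, q, zero_mul, mul_zero, zero_add, mul_eq_zero] at e3
      tauto
    · simp only [p, q, zero_mul, mul_zero, add_zero, mul_eq_zero] at e3
      tauto
    · exact Or.inl ⟨p, q⟩
  have ent : ∀ s : ℝ, ∀ i, (x * uMat (-(s * Complex.I))) i 0 = x i 0 ∧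
      (x * uMat (-(s * Complex.I))) i 1 = x i 1 - x i 0 * (s * Complex.I) := by
    intro s i
    obtain ⟨u1, u2, u3, u4⟩ := uMat_entries_s17 (-(s * Complex.I))
    constructor
    · rw [mul_entries, u1, u3]; ring
    · rw [mul_entries, u2, u4]; ring
  rcases cases with ⟨p, q⟩ | ⟨p, q⟩
  · rw [p, q] at d1 d2
    have hne : (x 0 0).re ^ 2 + (x 1 0).re ^ 2 ≠ 0 := by
      intro h0
      have a0 : (x 0 0).re = 0 := by nlinarith [sq_nonneg (x 0 0).re, sq_nonneg (x 1 0).re]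
      have c0 : (x 1 0).re = 0 := by nlinarith [sq_nonneg (x 0 0).re, sq_nonneg (x 1 0).re]
      rw [a0, c0] at d1; simp at d1
    refine ⟨((x 0 0).re * (x 0 1).im + (x 1 0).re * (x 1 1).im) /
      ((x 0 0).re ^ 2 + (x 1 0).re ^ 2), PP_of_real _ ?_⟩
    intro i j
    fin_cases j
    · fin_cases i <;> simp only [Fin.zero_eta, Fin.mk_one, Fin.isValue, ent, p, q]
    · fin_cases i <;> simp only [Fin.zero_eta, Fin.mk_one, Fin.isValue, ent, Complex.sub_im,
        Complex.mul_im, Complex.mul_re, Complex.I_re, Complex.I_im, Complex.ofReal_re,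
        Complex.ofReal_im, p, q] <;> field_simp
      · linear_combination -(x 1 0).re * d2
      · linear_combination (x 0 0).re * d2
  · rw [p, q] at d1 d2
    have hne : (x 0 0).im ^ 2 + (x 1 0).im ^ 2 ≠ 0 := by
      intro h0
      have a0 : (x 0 0).im = 0 := by nlinarith [sq_nonneg (x 0 0).im, sq_nonneg (x 1 0).im]
      have c0 : (x 1 0).im = 0 := by nlinarith [sq_nonneg (x 0 0).im, sq_nonneg (x 1 0).im]
      rw [a0, c0] at d1; simp at d1
    refine ⟨-((x 0 0).im * (x 0 1).re + (x 1 0).im * (x 1 1).re) /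
      ((x 0 0).im ^ 2 + (x 1 0).im ^ 2), PP_of_imag _ ?_⟩
    intro i j
    fin_cases j
    · fin_cases i <;> simp only [Fin.zero_eta, Fin.mk_one, Fin.isValue, ent, p, q]
    · fin_cases i <;> simp only [Fin.zero_eta, Fin.mk_one, Fin.isValue, ent, Complex.sub_re,
        Complex.mul_im, Complex.mul_re, Complex.I_re, Complex.I_im, Complex.ofReal_re,
        Complex.ofReal_im, p, q] <;> field_simp
      · linear_combination -(x 1 0).im * d2
      · linear_combination (x 0 0).im * d2

/-- In `G = PSL(2,ℂ)`: `{g : g U g⁻¹ ⊆ H} = 𝒩V`, where `𝒩` is the normalizer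
of `H` in `G`. -/
theorem conjugates_U_into_H_eq_normalizer_V :
    {g : PSL2C | ∀ t : ℝ, g * uu t * g⁻¹ ∈ Hset} =
      {x : PSL2C | ∃ n ∈ NmlH, ∃ s : ℝ, x = n * vv s} := by
  ext g
  simp only [Set.mem_setOf_eq]
  constructor
  · intro h
    obtain ⟨x, rfl⟩ := pr_surj_s17 g
    have h1 := h 1
    rw [uu, ← map_inv, ← map_mul, ← map_mul, pr_mem_Hset_iff, Complex.ofReal_one] at h1
    obtain ⟨s, hs⟩ := exists_PP x h1
    refine ⟨_, PP_mem _ hs, s, ?_⟩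
    rw [vv, ← map_mul, mul_assoc, uMat_mul, neg_add_cancel, uMat_zero, mul_one]
  · rintro ⟨n, hn, s, rfl⟩ t
    have hc : vv s * uu t = uu t * vv s := by
      rw [vv, uu, ← map_mul, ← map_mul, uMat_mul, uMat_mul, add_comm]
    have hu : uu t ∈ Hset := by
      rw [uu, pr_mem_Hset_iff]
      intro i j
      fin_cases i <;> fin_cases j <;> simp [uMat]
    have e : n * vv s * uu t * (n * vv s)⁻¹ = n * uu t * n⁻¹ := by
      rw [mul_assoc n, hc]; group
    rw [e]
    have hn' : (fun h => n * h * n⁻¹) '' Hset = Hset := hn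
    rw [← hn']
    exact ⟨_, hu, rfl⟩

end
end
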